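/- Let ⟨λ,ν⟩ be a reduced marked partition of type B (resp. C, D) of n that is not special, and set μ = d_S⟨λ,ν⟩. Then there is no marked partition ⟨μ,ξ⟩ of type C (resp. B, D) with underlying partition μ such that d_S⟨μ,ξ⟩ = λ. -/

import Mathlib

namespace NilDual

/-- A "partition" is encoded as a multiset of natural numbers (its parts). -/
abbrev Ptn := Multiset ℕ

/-- All parts are positive. -/
def IsPartition (l : Ptn) : Prop := ∀ a ∈ l, 0 < a

/-- `height l a` is the number of parts of `l` that are ≥ `a`. -/
def height (l : Ptn) (a : ℕ) : ℕ := Multiset.card (l.filter (fun p => a ≤ p))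

/-- `psum l j` is the sum of the `j` largest parts of `l`. -/
def psum (l : Ptn) (j : ℕ) : ℕ := ∑ a ∈ Finset.Icc 1 l.sum, min j (height l a)

/-- `Dom l m` means `l ≤ m` in the dominance order. -/
def Dom (l m : Ptn) : Prop := ∀ j : ℕ, psum l j ≤ psum m j

/-- The transpose (conjugate) partition. -/
def transpose (l : Ptn) : Ptn :=
  Multiset.filter (fun x => 0 < x)
    (Multiset.map (fun a => height l a) (Finset.Icc 1 l.sum).val)

/-- The largest part (0 for the empty partition). -/
def maxPart (l : Ptn) : ℕ := l.sup

/-- The smallest part (0 for the empty partition). -/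
noncomputable def minPart (l : Ptn) : ℕ := sInf {a : ℕ | a ∈ l}

/-- `λ⁺`: add 1 to the largest part. -/
def up (l : Ptn) : Ptn := (maxPart l + 1) ::ₘ l.erase (maxPart l)

/-- `λ⁻`: subtract 1 from the smallest part, deleting it if it becomes 0. -/
noncomputable def down (l : Ptn) : Ptn :=
  if minPart l ≤ 1 then l.erase (minPart l)
  else (minPart l - 1) ::ₘ l.erase (minPart l)

/-- The join `λ ∨ μ = (λ* ∪ μ*)*`. -/
def pjoin (l m : Ptn) : Ptn := transpose (transpose l + transpose m)

/-- `λ₋ = (λ*⁻)*`. -/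
noncomputable def lowerStar (l : Ptn) : Ptn := transpose (down (transpose l))

inductive PType | B | C | D
deriving DecidableEq

/-- Parts of this parity must occur with even multiplicity in a partition of type `X`. -/
def badPart : PType → ℕ → Prop
  | PType.B, a => Even a
  | PType.C, a => Odd a
  | PType.D, a => Even a

/-- Membership in `𝒫_X` (sum unconstrained). -/
def InP (X : PType) (l : Ptn) : Prop :=
  IsPartition l ∧ ∀ a : ℕ, badPart X a → Even (l.count a)

/-- The parity of `n` required for `𝒫_X(n)` to be defined. -/
def sumParity : PType → ℕ → Prop
  | PType.B, n => Odd n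
  | PType.C, n => Even n
  | PType.D, n => Even n

/-- `m` is the X-collapse of `l`: `m ∈ 𝒫_X(|l|)`, `m ≤ l` in dominance order, and `m`
dominates every member of `𝒫_X(|l|)` that is dominated by `l`. -/
def IsCollapse (X : PType) (l m : Ptn) : Prop :=
  InP X m ∧ m.sum = l.sum ∧ Dom m l ∧
    ∀ ν : Ptn, InP X ν → ν.sum = l.sum → Dom ν l → Dom ν m

def CollapseDefined (X : PType) (l : Ptn) : Prop := ∃ m, IsCollapse X l m

open Classical in
/-- The X-collapse `λ_X` (junk value `0` if it does not exist). -/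
noncomputable def collapse (X : PType) (l : Ptn) : Ptn :=
  if h : CollapseDefined X l then h.choose else 0

/-- `l` is superior to `m`: smallest part of `l` ≥ largest part of `m`. -/
def Superior (l m : Ptn) : Prop := maxPart m ≤ minPart l

def EvenlySuperior (l m : Ptn) : Prop := ∃ k : ℕ, Even k ∧ maxPart m ≤ k ∧ k ≤ minPart l

def OddlySuperior (l m : Ptn) : Prop := ∃ k : ℕ, Odd k ∧ maxPart m ≤ k ∧ k ≤ minPart l

/-- The parity required of marked parts in type `X`. -/
def markParity : PType → ℕ → Prop
  | PType.C, a => Even a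
  | _, a => Odd a

/-- `(ν, η)` is a marked partition of type `X`, with underlying partition `λ = ν + η`. -/
def IsMarked (X : PType) (nu eta : Ptn) : Prop :=
  InP X (nu + eta) ∧ sumParity X (nu + eta).sum ∧
  (∀ a ∈ nu, nu.count a = 1 ∧ markParity X a) ∧
  ((X = PType.B ∨ X = PType.D) → Even (Multiset.card nu))

/-- The Sommers duality map `d_S` on marked partitions `(ν, η)`. -/
noncomputable def dS (X : PType) (nu eta : Ptn) : Ptn :=
  match X with
  | PType.B => collapse PType.C (transpose (nu + collapse PType.C (down eta)))
  | PType.C => collapse PType.B (transpose (nu + collapse PType.B (up eta)))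
  | PType.D =>
      collapse PType.D (transpose (nu + transpose (collapse PType.D (transpose eta))))

/-- `a` is a markable part of `l` in type `X`. -/
def Markable (X : PType) (l : Ptn) (a : ℕ) : Prop :=
  a ∈ l ∧ markParity X a ∧
    (match X with
     | PType.B => Odd (height l a)
     | PType.C => Even (height l a)
     | PType.D => Even (height l a))

/-- The marked partition `⟨l, ν⟩` is reduced. -/
def Reduced (X : PType) (l nu : Ptn) : Prop := ∀ a ∈ nu, Markable X l a

/-- The parts entering the definition of a special marked partition:
even of odd height (B), odd of even height (C), even of even height (D). -/
def AntiPart (X : PType) (l : Ptn) (a : ℕ) : Prop :=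
  match X with
  | PType.B => Even a ∧ Odd (height l a)
  | PType.C => Odd a ∧ Even (height l a)
  | PType.D => Even a ∧ Even (height l a)

/-- The reduced marked partition `⟨l, ν⟩` is special. -/
def SpecialMP (X : PType) (l nu : Ptn) : Prop :=
  ∀ a ∈ l, AntiPart X l a → Even (height nu a)

/-- `a` is the largest part of `l` whose height satisfies `P`. -/
def LargestWith (l : Ptn) (P : ℕ → Prop) (a : ℕ) : Prop :=
  a ∈ l ∧ P (height l a) ∧ ∀ b ∈ l, P (height l b) → b ≤ a

/-- Height parity for the top marked part in a basic block. -/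
def heightParity : PType → ℕ → Prop
  | PType.B => fun n => Odd n
  | _ => fun n => Even n

/-- A basic block of type `X`. -/
def BasicBlock (X : PType) (nu eta : Ptn) : Prop :=
  IsMarked X nu eta ∧
  ((∃ n1 n2 : ℕ, n1 < n2 ∧ nu = {n2, n1} ∧ n1 = minPart (nu + eta) ∧
      LargestWith (nu + eta) (heightParity X) n2) ∨
   (X = PType.C ∧ ∃ n2 : ℕ, nu = {n2} ∧ LargestWith (nu + eta) (heightParity X) n2))

/-- An ultrabasic block: a basic block with `n₁ ≤ 1`. -/
def Ultrabasic (X : PType) (nu eta : Ptn) : Prop :=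
  BasicBlock X nu eta ∧ (Multiset.card nu = 2 → minPart nu ≤ 1)


/-- The Langlands-dual type. -/
def dualType : PType → PType
  | PType.B => PType.C
  | PType.C => PType.B
  | PType.D => PType.D

/-!
For every partition `σ_k(λ*) + σ_j(λ) ≤ k j + |λ|`, with equality when `(j, k)` lies on the rim of
the Young diagram. Put `ε_X = 0` in type C and `ε_X = 1` in types B and D, write `X^∨` for the dual
type, and let `a` be a part of `λ` violating specialness, `m = height_λ(a) - 1` and `μ = d_S⟨λ,ν⟩`.

* The `X`-collapse lowers `σ_j` by at most one, and only where this turns the parity of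
  `σ_j + ε_X j` from odd to even. If `d_S⟨μ,ξ⟩ = λ`, then `σ_m(λ) + ε_X m` is odd, so the outer
  collapse is inactive at `m` and `σ_m(μ*) ≤ σ_m(λ) + ε_{X^∨}`.
* Because `ν` has an odd number of parts `≥ a`, the number of parts `p` of `η` to be summed has the
  parity for which the inner operation on `η` gains `ε_{X^∨}` in `σ_p(η)`, at the corners on both
  sides of row `m`. The inequality above turns this into `σ_m(μ*) ≥ σ_m(λ) + ε_{X^∨}`, and a parity
  count excludes equality.
-/

/-- `ε_X`: `1` for the orthogonal types `B`, `D` and `0` for the symplectic type `C`. The bad parts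
of type `X` are the `a` with `a + ε_X` odd, and `d_S` changes the size of a partition by
`ε_{X^∨} - ε_X`, where `X^∨` is the dual type. -/
def parityShift : PType → ℕ
  | PType.C => 0
  | _ => 1

/-- The `i`-th largest part of `l`, counted from `i = 0`, and `0` beyond the last part. -/
def part (l : Ptn) (i : ℕ) : ℕ :=
  ((Finset.Icc 1 l.sum).filter (fun a => i < height l a)).card

/-- The sum of the first `k` columns of the Young diagram of `l`, i.e. `σ_k(λ*)`. -/
def csum (l : Ptn) (k : ℕ) : ℕ := ∑ a ∈ Finset.Icc 1 k, height l a

/-- The sum of `p + ε_X` over the `j` largest parts `p`. Its parity controls both membership in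
`𝒫_X` and the `X`-collapse. -/
def shiftedSum (X : PType) (l : Ptn) (j : ℕ) : ℕ := psum l j + parityShift X * j

/-- The lattice point below row `j` and right of column `k` lies on the rim of the Young diagram
of `l`, the rim being continued along the vertical axis `k = 0` below the diagram. -/
def OnBoundary (l : Ptn) (j k : ℕ) : Prop := height l (k + 1) ≤ j ∧ (0 < k → j ≤ height l k)

theorem height_cons (x : ℕ) (l : Ptn) (a : ℕ) :
    height (x ::ₘ l) a = height l a + if a ≤ x then 1 else 0 := by
  simp only [height, ← Multiset.countP_eq_card_filter, Multiset.countP_cons]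

theorem height_add (l m : Ptn) (a : ℕ) : height (l + m) a = height l a + height m a := by
  simp [height]

theorem height_antitone (l : Ptn) : Antitone (height l) := fun _ _ hab =>
  Multiset.card_le_card (Multiset.monotone_filter_right l fun _ => hab.trans)

theorem height_zero_right (l : Ptn) : height l 0 = Multiset.card l := by simp [height]

theorem height_eq_zero_of_forall_lt {l : Ptn} {a : ℕ} (h : ∀ x ∈ l, x < a) : height l a = 0 := by
  simpa [height, Multiset.filter_eq_nil] using h

theorem height_eq_zero_of_sum_lt {l : Ptn} {a : ℕ} (h : l.sum < a) : height l a = 0 :=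
  height_eq_zero_of_forall_lt fun _ hx => (Multiset.le_sum_of_mem hx).trans_lt h

theorem height_eq_height_succ_add_count (l : Ptn) (a : ℕ) :
    height l a = height l (a + 1) + l.count a := by
  induction l using Multiset.induction with
  | empty => simp [height]
  | cons x l ih =>
    rw [height_cons, height_cons, ih, Multiset.count_cons]
    split_ifs <;> omega

theorem csum_zero (l : Ptn) : csum l 0 = 0 := by simp [csum]

theorem csum_succ (l : Ptn) (k : ℕ) : csum l (k + 1) = csum l k + height l (k + 1) :=
  Finset.sum_Icc_succ_top (by omega) _

theorem csum_add (l m : Ptn) (k : ℕ) : csum (l + m) k = csum l k + csum m k := by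
  simp only [csum, height_add, Finset.sum_add_distrib]

theorem csum_cons (x : ℕ) (l : Ptn) (k : ℕ) : csum (x ::ₘ l) k = csum l k + min k x := by
  induction k with
  | zero => simp [csum_zero]
  | succ k ih =>
    rw [csum_succ, csum_succ, ih, height_cons]
    split_ifs <;> omega

theorem csum_of_sum_le {l : Ptn} {k : ℕ} (h : l.sum ≤ k) : csum l k = l.sum := by
  induction l using Multiset.induction with
  | empty => simp [csum, height]
  | cons x l ih =>
    rw [Multiset.sum_cons] at h ⊢
    rw [csum_cons, ih (by omega)]
    omega

theorem psum_eq_sum_Icc_of_sum_le {l : Ptn} {N : ℕ} (h : l.sum ≤ N) (j : ℕ) :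
    psum l j = ∑ a ∈ Finset.Icc 1 N, min j (height l a) := by
  refine Finset.sum_subset (Finset.Icc_subset_Icc_right h) fun a ha hal => ?_
  simp only [Finset.mem_Icc] at ha hal
  rw [height_eq_zero_of_sum_lt (by omega), Nat.min_zero]

theorem csum_eq_sum_Icc_of_le (l : Ptn) {k N : ℕ} (h : k ≤ N) :
    csum l k = ∑ a ∈ Finset.Icc 1 N, if a ≤ k then height l a else 0 := by
  rw [← Finset.sum_filter]
  refine Finset.sum_congr ?_ fun _ _ => rfl
  ext a
  simp only [Finset.mem_Icc, Finset.mem_filter]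
  omega

theorem psum_zero (l : Ptn) : psum l 0 = 0 := by simp [psum]

theorem psum_succ (l : Ptn) (j : ℕ) : psum l (j + 1) = psum l j + part l j := by
  rw [psum, psum, part, Finset.card_filter, ← Finset.sum_add_distrib]
  refine Finset.sum_congr rfl fun a _ => ?_
  split_ifs <;> omega

theorem psum_of_card_le {l : Ptn} {j : ℕ} (h : Multiset.card l ≤ j) : psum l j = l.sum := by
  rw [← csum_of_sum_le le_rfl]
  refine Finset.sum_congr rfl fun a _ => min_eq_right ?_
  exact ((height_antitone l a.zero_le).trans (height_zero_right l).le).trans h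

theorem le_card_filter_Icc_iff {p : ℕ → Prop} [DecidablePred p] (hp : ∀ x y, x ≤ y → p y → p x)
    {N a : ℕ} (ha : 1 ≤ a) :
    a ≤ ((Finset.Icc 1 N).filter p).card ↔ a ≤ N ∧ p a := by
  refine ⟨fun hcard => ?_, fun ⟨haN, hpa⟩ => ?_⟩
  · by_contra hnot
    have hsub : (Finset.Icc 1 N).filter p ⊆ Finset.Icc 1 (a - 1) := fun b hb => by
      simp only [Finset.mem_filter, Finset.mem_Icc] at hb ⊢
      have : ¬ a ≤ b := fun hab => hnot ⟨by omega, hp a b hab hb.2⟩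
      omega
    have := Finset.card_le_card hsub
    rw [Nat.card_Icc] at this
    omega
  · have hsub : Finset.Icc 1 a ⊆ (Finset.Icc 1 N).filter p := fun b hb => by
      simp only [Finset.mem_filter, Finset.mem_Icc] at hb ⊢
      exact ⟨⟨hb.1, hb.2.trans haN⟩, hp b a hb.2 hpa⟩
    simpa using Finset.card_le_card hsub

theorem le_part_iff (l : Ptn) {a : ℕ} (i : ℕ) (ha : 1 ≤ a) : a ≤ part l i ↔ i < height l a := by
  rw [part, le_card_filter_Icc_iff (fun x y hxy hy => hy.trans_le (height_antitone l hxy)) ha,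
    and_iff_right_iff_imp]
  intro hi
  by_contra hsum
  rw [height_eq_zero_of_sum_lt (by omega)] at hi
  omega

theorem part_antitone (l : Ptn) : Antitone (part l) := fun _ _ hij =>
  Finset.card_le_card (Finset.monotone_filter_right _ fun _ _ => hij.trans_lt)

theorem part_eq_zero_of_card_le {l : Ptn} {j : ℕ} (h : Multiset.card l ≤ j) : part l j = 0 := by
  have := psum_succ l j
  rw [psum_of_card_le h, psum_of_card_le (h.trans j.le_succ)] at this
  omega

theorem exists_isPartition_part_eq {f : ℕ → ℕ} (hf : Antitone f) {N : ℕ} (hN : f N = 0) :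
    ∃ m : Ptn, IsPartition m ∧ ∀ i, part m i = f i := by
  let m : Ptn := ((Finset.Icc 1 N).val.map fun x => f (x - 1)).filter (0 < ·)
  have height_m (a : ℕ) (ha : 1 ≤ a) :
      height m a = ((Finset.Icc 1 N).filter fun x => a ≤ f (x - 1)).card := by
    rw [height, Multiset.filter_filter, Multiset.filter_map, Multiset.card_map]
    refine congrArg Multiset.card (Multiset.filter_congr fun x _ => ?_)
    simp only [Function.comp_apply]
    omega
  refine ⟨m, fun a ha => (Multiset.mem_filter.1 ha).2, fun i => ?_⟩
  have le_iff (a : ℕ) (ha : 1 ≤ a) : a ≤ part m i ↔ a ≤ f i := by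
    rw [le_part_iff _ _ ha, height_m a ha, ← Nat.succ_le_iff,
      le_card_filter_Icc_iff (fun x y hxy hy => hy.trans (hf (by omega))) (by omega),
      Nat.succ_sub_one, and_iff_right_iff_imp]
    intro hai
    by_contra hiN
    have := hf (show N ≤ i by omega)
    omega
  have h₁ := le_iff (part m i)
  have h₂ := le_iff (f i)
  omega

theorem height_transpose (l : Ptn) (i : ℕ) : height (transpose l) (i + 1) = part l i := by
  rw [height, transpose, Multiset.filter_filter, Multiset.filter_map, Multiset.card_map]
  refine congrArg Multiset.card (Multiset.filter_congr fun x _ => ?_)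
  simp only [Function.comp_apply]
  omega

theorem part_transpose (l : Ptn) (j : ℕ) : part (transpose l) j = height l (j + 1) := by
  have le_iff (a : ℕ) : a + 1 ≤ part (transpose l) j ↔ a + 1 ≤ height l (j + 1) := by
    rw [le_part_iff _ _ (by omega), height_transpose, ← Nat.succ_le_iff, le_part_iff _ _ (by omega),
      Nat.succ_le_iff]
  have h₁ := le_iff (part (transpose l) j - 1)
  have h₂ := le_iff (height l (j + 1) - 1)
  omega

theorem psum_transpose (l : Ptn) (j : ℕ) : psum (transpose l) j = csum l j := by
  induction j with
  | zero => rw [psum_zero, csum_zero]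
  | succ j ih => rw [psum_succ, csum_succ, ih, part_transpose]

theorem csum_transpose (l : Ptn) (k : ℕ) : csum (transpose l) k = psum l k := by
  induction k with
  | zero => rw [psum_zero, csum_zero]
  | succ k ih => rw [psum_succ, csum_succ, ih, height_transpose]

theorem sum_transpose (l : Ptn) : (transpose l).sum = l.sum := by
  have h := csum_transpose l (max (Multiset.card l) (transpose l).sum)
  rwa [csum_of_sum_le (le_max_right _ _), psum_of_card_le (le_max_left _ _)] at h

/-! ### The rim of a Young diagram -/

theorem onBoundary_height (l : Ptn) (k : ℕ) : OnBoundary l (height l k) k :=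
  ⟨height_antitone l k.le_succ, fun _ => le_rfl⟩

theorem onBoundary_height_succ (l : Ptn) (k : ℕ) : OnBoundary l (height l (k + 1)) k :=
  ⟨le_rfl, fun _ => height_antitone l k.le_succ⟩

theorem onBoundary_succ_part (l : Ptn) (j : ℕ) : OnBoundary l (j + 1) (part l j) := by
  have := le_part_iff l (a := part l j + 1) j (by omega)
  exact ⟨by omega, fun hpos => (le_part_iff l j hpos).1 le_rfl⟩

theorem csum_add_psum_eq_sum_Icc {l : Ptn} {k N : ℕ} (hk : k ≤ N) (hl : l.sum ≤ N) (j : ℕ) :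
    csum l k + psum l j =
      ∑ a ∈ Finset.Icc 1 N, ((if a ≤ k then height l a else 0) + min j (height l a)) := by
  rw [csum_eq_sum_Icc_of_le l hk, psum_eq_sum_Icc_of_sum_le hl, Finset.sum_add_distrib]

theorem mul_add_sum_eq_sum_Icc {l : Ptn} {k N : ℕ} (hk : k ≤ N) (hl : l.sum ≤ N) (j : ℕ) :
    k * j + l.sum = ∑ a ∈ Finset.Icc 1 N, ((if a ≤ k then j else 0) + height l a) := by
  have hfilter : (Finset.Icc 1 N).filter (· ≤ k) = Finset.Icc 1 k := by
    ext a
    simp only [Finset.mem_Icc, Finset.mem_filter]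
    omega
  rw [Finset.sum_add_distrib, ← Finset.sum_filter, hfilter, Finset.sum_const, Nat.card_Icc,
    Nat.add_sub_cancel, smul_eq_mul, ← csum_of_sum_le hl, csum]

theorem csum_add_psum_le (l : Ptn) (k j : ℕ) : csum l k + psum l j ≤ k * j + l.sum := by
  rw [csum_add_psum_eq_sum_Icc (le_max_left k _) (le_max_right _ l.sum),
    mul_add_sum_eq_sum_Icc (le_max_left k _) (le_max_right _ l.sum)]
  exact Finset.sum_le_sum fun a _ => by split_ifs <;> omega

theorem OnBoundary.csum_add_psum_eq {l : Ptn} {j k : ℕ} (h : OnBoundary l j k) :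
    csum l k + psum l j = k * j + l.sum := by
  rw [csum_add_psum_eq_sum_Icc (le_max_left k _) (le_max_right _ l.sum),
    mul_add_sum_eq_sum_Icc (le_max_left k _) (le_max_right _ l.sum)]
  refine Finset.sum_congr rfl fun a ha => ?_
  have ha1 := (Finset.mem_Icc.1 ha).1
  split_ifs with hak
  · have := (h.2 (by omega)).trans (height_antitone l hak)
    omega
  · have := (height_antitone l (show k + 1 ≤ a by omega)).trans h.1
    omega

theorem csum_le_csum_of_dom {l m : Ptn} (h : Dom m l) (hsum : m.sum = l.sum) (k : ℕ) :
    csum l k ≤ csum m k := by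
  have h₁ := (onBoundary_height m k).csum_add_psum_eq
  have h₂ := csum_add_psum_le l k (height m k)
  have h₃ := h (height m k)
  omega

theorem OnBoundary.psum_add_le {l m : Ptn} {i j k : ℕ} (hl : OnBoundary l i k)
    (hm : OnBoundary m j k) : psum (l + m) (i + j) ≤ psum l i + psum m j := by
  have h₁ := hl.csum_add_psum_eq
  have h₂ := hm.csum_add_psum_eq
  have h₃ := csum_add_psum_le (l + m) k (i + j)
  rw [csum_add, Multiset.sum_add, mul_add] at h₃
  omega

theorem OnBoundary.psum_add_mul_eq {l : Ptn} {i j k : ℕ} (hi : OnBoundary l i k)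
    (hj : OnBoundary l j k) : psum l i + k * j = psum l j + k * i := by
  have h₁ := hi.csum_add_psum_eq
  have h₂ := hj.csum_add_psum_eq
  omega

/-! ### Parity of partial sums and membership in `𝒫_X` -/

theorem badPart_iff (X : PType) (a : ℕ) : badPart X a ↔ Odd (a + parityShift X) := by
  cases X <;> simp [badPart, parityShift, Nat.odd_add_one]

theorem shiftedSum_zero (X : PType) (l : Ptn) : shiftedSum X l 0 = 0 := by
  simp [shiftedSum, psum_zero]

theorem shiftedSum_succ (X : PType) (l : Ptn) (j : ℕ) :
    shiftedSum X l (j + 1) = shiftedSum X l j + (part l j + parityShift X) := by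
  rw [shiftedSum, shiftedSum, psum_succ]
  ring

theorem OnBoundary.shiftedSum_add_mul_eq {l : Ptn} {i j k : ℕ} (hi : OnBoundary l i k)
    (hj : OnBoundary l j k) (X : PType) :
    shiftedSum X l i + (k + parityShift X) * j = shiftedSum X l j + (k + parityShift X) * i := by
  have h := hi.psum_add_mul_eq hj
  simp only [shiftedSum]
  linarith

theorem shiftedSum_height_eq (X : PType) (l : Ptn) (a : ℕ) :
    shiftedSum X l (height l a) =
      shiftedSum X l (height l (a + 1)) + (a + parityShift X) * l.count a := by
  have h := (onBoundary_height l a).shiftedSum_add_mul_eq (onBoundary_height_succ l a) X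
  rw [height_eq_height_succ_add_count l a] at h ⊢
  linarith

theorem InP.even_shiftedSum_height {X : PType} {m : Ptn} (hm : InP X m) (a : ℕ) :
    Even (shiftedSum X m (height m a)) := by
  obtain ⟨d, hd⟩ : ∃ d, m.sum < a + d := ⟨m.sum + 1, by omega⟩
  induction d generalizing a with
  | zero =>
    rw [height_eq_zero_of_sum_lt (by omega), shiftedSum_zero]
    exact Even.zero
  | succ d ih =>
    rw [shiftedSum_height_eq]
    refine (ih (a + 1) (by omega)).add ?_
    by_cases hbad : badPart X a
    · exact (hm.2 a hbad).mul_left _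
    · rw [badPart_iff, Nat.not_odd_iff_even] at hbad
      exact hbad.mul_right _

theorem InP.part_eq_of_odd_shiftedSum {X : PType} {m : Ptn} (hm : InP X m) {j : ℕ}
    (hodd : Odd (shiftedSum X m (j + 1))) :
    part m (j + 1) = part m j ∧ Odd (part m j + parityShift X) := by
  constructor
  · by_contra hne
    have hlt : part m (j + 1) < part m j := (part_antitone m j.le_succ).lt_of_ne hne
    have hheight : height m (part m j) = j + 1 := by
      have h₁ := (le_part_iff m (a := part m j) j (by omega)).1 le_rfl
      have h₂ := le_part_iff m (a := part m j) (j + 1) (by omega)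
      omega
    exact Nat.not_odd_iff_even.2 (hheight ▸ hm.even_shiftedSum_height _) hodd
  · have hline := (onBoundary_succ_part m j).shiftedSum_add_mul_eq
      (onBoundary_height_succ m (part m j)) X
    have heven := hm.even_shiftedSum_height (part m j + 1)
    by_contra hgood
    rw [Nat.not_odd_iff_even] at hgood
    have : Even (shiftedSum X m (j + 1) +
        (part m j + parityShift X) * height m (part m j + 1)) :=
      hline ▸ heven.add (hgood.mul_right _)
    exact Nat.not_odd_iff_even.2 ((Nat.even_add.1 this).2 (hgood.mul_right _)) hodd

theorem inP_of_even_shiftedSum {X : PType} {m : Ptn} (hm : IsPartition m)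
    (hcorner : ∀ j, part m (j + 1) < part m j → Even (shiftedSum X m (j + 1))) : InP X m := by
  have even_height (b : ℕ) (hb : 1 ≤ b) : Even (shiftedSum X m (height m b)) := by
    rcases hheight : height m b with _ | j
    · simp [shiftedSum_zero]
    · have h₁ := le_part_iff m j hb
      have h₂ := le_part_iff m (j + 1) hb
      exact hcorner j (by omega)
  refine ⟨hm, fun a hbad => ?_⟩
  rcases a.eq_zero_or_pos with rfl | ha
  · rw [Multiset.count_eq_zero_of_notMem fun h0 => (hm 0 h0).ne rfl]
    exact Even.zero
  · have h := even_height a ha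
    rw [shiftedSum_height_eq, Nat.even_add, Nat.even_mul] at h
    exact (h.1 (even_height (a + 1) (by omega))).resolve_left
      (Nat.not_even_iff_odd.2 ((badPart_iff X a).1 hbad))

theorem InP.height_succ_add_two_le {X : PType} {l : Ptn} (hl : InP X l) {a : ℕ} (ha : a ∈ l)
    (hbad : badPart X a) : height l (a + 1) + 2 ≤ height l a := by
  have hpos := Multiset.count_pos.2 ha
  obtain ⟨c, hc⟩ := hl.2 a hbad
  have := height_eq_height_succ_add_count l a
  omega

theorem InP.onBoundary_of_bad {X : PType} {l : Ptn} (hl : InP X l) {a g : ℕ} (ha : a ∈ l)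
    (hbad : badPart X a) (hg : height l a = g + 2) {j : ℕ} (hj : g ≤ j ∧ j ≤ g + 2) :
    OnBoundary l j a := by
  have := hl.height_succ_add_two_le ha hbad
  exact ⟨by omega, fun _ => by omega⟩

theorem InP.odd_shiftedSum_of_bad {X : PType} {l : Ptn} (hl : InP X l) {a m : ℕ} (ha : a ∈ l)
    (hbad : badPart X a) (hm : height l a = m + 1) : Odd (shiftedSum X l m) := by
  have hcount := hl.height_succ_add_two_le ha hbad
  have hrim : OnBoundary l m a := ⟨by omega, fun _ => by omega⟩
  have hline := hrim.shiftedSum_add_mul_eq (onBoundary_height l a) X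
  have heven := hl.even_shiftedSum_height a
  rw [hm] at hline heven
  have hstep : shiftedSum X l m + (a + parityShift X) = shiftedSum X l (m + 1) := by linarith
  rw [← hstep, Nat.even_add'] at heven
  exact heven.2 ((badPart_iff X a).1 hbad)

theorem InP.even_shiftedSum_of_height_eq_add_two {X : PType} {l : Ptn} (hl : InP X l) {a g : ℕ}
    (ha : a ∈ l) (hbad : badPart X a) (hg : height l a = g + 2) : Even (shiftedSum X l g) := by
  have hline := (hl.onBoundary_of_bad ha hbad hg (j := g) (by omega)).shiftedSum_add_mul_eq
    (onBoundary_height l a) X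
  have heven := hl.even_shiftedSum_height a
  rw [hg] at hline heven
  have hstep : shiftedSum X l g + 2 * (a + parityShift X) = shiftedSum X l (g + 2) := by linarith
  rw [← hstep, Nat.even_add] at heven
  exact heven.2 (even_two_mul _)

/-! ### The collapse -/

/-- The number by which the `j`-th partial sum of `l` drops in the `X`-collapse. At `j = 0` the
truncated `j - 1` is harmless, because `shiftedSum X l 0 = 0` is even. -/
def collapseDefect (X : PType) (l : Ptn) (j : ℕ) : ℕ :=
  if shiftedSum X l j % 2 = 1 ∧
    ¬ (part l (j - 1) = part l j ∧ (part l j + parityShift X) % 2 = 1) then 1 else 0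

theorem collapseDefect_le (X : PType) (l : Ptn) (j : ℕ) :
    collapseDefect X l j ≤ shiftedSum X l j % 2 := by
  rw [collapseDefect]
  split_ifs <;> omega

theorem collapseDefect_succ_le (X : PType) (l : Ptn) (j : ℕ) :
    collapseDefect X l (j + 1) ≤ part l j + collapseDefect X l j := by
  have hanti := part_antitone l j.le_succ
  simp only [collapseDefect, shiftedSum_succ, Nat.add_sub_cancel, Nat.succ_eq_add_one] at hanti ⊢
  split_ifs <;> omega

theorem collapseDefect_concave (X : PType) (l : Ptn) (j : ℕ) :
    part l (j + 1) + 2 * collapseDefect X l (j + 1) ≤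
      part l j + collapseDefect X l j + collapseDefect X l (j + 1 + 1) := by
  have hanti := part_antitone l j.le_succ
  simp only [collapseDefect, shiftedSum_succ, Nat.add_sub_cancel, Nat.succ_eq_add_one] at hanti ⊢
  split_ifs <;> omega

theorem part_succ_eq_of_odd_sub_collapseDefect {X : PType} {l : Ptn} {j : ℕ}
    (hodd : Odd (shiftedSum X l (j + 1) - collapseDefect X l (j + 1))) :
    part l (j + 1) = part l j ∧ collapseDefect X l j = 0 ∧ collapseDefect X l (j + 1) = 0 ∧
      collapseDefect X l (j + 1 + 1) = 0 := by
  rw [Nat.odd_iff] at hodd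
  simp only [collapseDefect, shiftedSum_succ, Nat.add_sub_cancel] at hodd ⊢
  split_ifs at hodd ⊢ <;> omega

theorem collapseDefect_eq_zero_of_card_lt {X : PType} {l : Ptn} (hl : sumParity X l.sum) {j : ℕ}
    (hj : Multiset.card l < j) : collapseDefect X l j = 0 := by
  have h₁ := part_eq_zero_of_card_le (l := l) (j := j) (by omega)
  have h₂ := part_eq_zero_of_card_le (l := l) (j := j - 1) (by omega)
  cases X <;> simp_all [collapseDefect, shiftedSum, parityShift, sumParity, psum_of_card_le hj.le,
    Nat.even_iff]

theorem InP.psum_add_collapseDefect_le {X : PType} {l m : Ptn} (hm : InP X m) (hdom : Dom m l)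
    (j : ℕ) : psum m j + collapseDefect X l j ≤ psum l j := by
  have hdef := collapseDefect_le X l j
  rcases (hdom j).lt_or_eq with hlt | heq
  · omega
  rw [heq, add_le_iff_nonpos_right, nonpos_iff_eq_zero]
  by_contra hne
  have hodd : Odd (shiftedSum X m j) := by
    rw [Nat.odd_iff, shiftedSum, heq]
    change shiftedSum X l j % 2 = 1
    omega
  rcases j with _ | i
  · simp [shiftedSum_zero] at hodd
  obtain ⟨hflat, hbad⟩ := hm.part_eq_of_odd_shiftedSum hodd
  have hanti : part l (i + 1) ≤ part l i := part_antitone l i.le_succ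
  have hbefore := hdom i
  have hafter := hdom (i + 1 + 1)
  simp only [psum_succ] at hafter heq
  simp only [collapseDefect, Nat.add_sub_cancel, Nat.odd_iff] at hne hbad
  have : part l i = part m i ∧ part l (i + 1) = part m i := by omega
  simp [this, hbad] at hne

theorem exists_isCollapse {X : PType} {l : Ptn} (hl : sumParity X l.sum) :
    ∃ m, IsCollapse X l m ∧ ∀ j, psum m j + collapseDefect X l j = psum l j := by
  let f (j : ℕ) : ℕ := part l j + collapseDefect X l j - collapseDefect X l (j + 1)
  have hf : Antitone f := antitone_nat_of_succ_le fun j => by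
    have h₁ := collapseDefect_succ_le X l j
    have h₂ := collapseDefect_concave X l j
    grind
  have hfzero : f (Multiset.card l + 1) = 0 := by
    simp only [f, part_eq_zero_of_card_le (Nat.le_succ _),
      collapseDefect_eq_zero_of_card_lt hl (Nat.lt_succ_self _), Nat.zero_sub, add_zero]
  obtain ⟨m, hm, hpart⟩ := exists_isPartition_part_eq hf hfzero
  have hpsum (j : ℕ) : psum m j + collapseDefect X l j = psum l j := by
    induction j with
    | zero => simp [psum_zero, collapseDefect, shiftedSum_zero]
    | succ j ih =>
      have := collapseDefect_succ_le X l j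
      rw [psum_succ, psum_succ, hpart]
      grind
  have hsum : m.sum = l.sum := by
    have h := hpsum (max (Multiset.card m) (Multiset.card l + 1))
    rwa [psum_of_card_le (le_max_left _ _), collapseDefect_eq_zero_of_card_lt hl (by omega),
      psum_of_card_le (by omega)] at h
  have hinP : InP X m := inP_of_even_shiftedSum hm fun j hcorner => by
    by_contra hodd
    have hshift : shiftedSum X m (j + 1) =
        shiftedSum X l (j + 1) - collapseDefect X l (j + 1) := by
      have := hpsum (j + 1)
      simp only [shiftedSum]
      omega
    rw [Nat.not_even_iff_odd, hshift] at hodd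
    have := part_succ_eq_of_odd_sub_collapseDefect hodd
    rw [hpart, hpart] at hcorner
    grind
  exact ⟨m, ⟨hinP, hsum, fun j => (Nat.le_add_right _ _).trans (hpsum j).le,
    fun ν hν _ hdom j => by
      have := hν.psum_add_collapseDefect_le hdom j
      have := hpsum j
      omega⟩, hpsum⟩

theorem isCollapse_collapse {X : PType} {l : Ptn} (hl : sumParity X l.sum) :
    IsCollapse X l (collapse X l) := by
  have hdef : CollapseDefined X l := (exists_isCollapse hl).imp fun _ => And.left
  rw [collapse, dif_pos hdef]
  exact hdef.choose_spec

theorem psum_le_psum_collapse_add {X : PType} {l : Ptn} (hl : sumParity X l.sum) (j : ℕ) :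
    psum l j ≤ psum (collapse X l) j + shiftedSum X l j % 2 := by
  obtain ⟨m, hm, hpsum⟩ := exists_isCollapse hl
  have hle := (isCollapse_collapse hl).2.2.2 m hm.1 hm.2.1 hm.2.2.1 j
  have := hpsum j
  have := collapseDefect_le X l j
  omega

theorem psum_collapse_eq_of_odd {X : PType} {l : Ptn} (hl : sumParity X l.sum) {j : ℕ}
    (hodd : Odd (shiftedSum X (collapse X l) j)) : psum (collapse X l) j = psum l j := by
  have hle := (isCollapse_collapse hl).2.2.1 j
  have hge := psum_le_psum_collapse_add hl j
  simp only [shiftedSum, Nat.odd_iff] at hodd hge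
  omega

theorem psum_collapse_eq_of_even {X : PType} {l : Ptn} (hl : sumParity X l.sum) {j : ℕ}
    (heven : Even (shiftedSum X l j)) : psum (collapse X l) j = psum l j := by
  have hle := (isCollapse_collapse hl).2.2.1 j
  have hge := psum_le_psum_collapse_add hl j
  rw [Nat.even_iff.1 heven] at hge
  omega

/-! ### Raising the largest part and lowering the smallest part -/

theorem maxPart_mem {l : Ptn} (h : l ≠ 0) : maxPart l ∈ l := by
  obtain ⟨x, hx, heq⟩ := Finset.exists_mem_eq_sup l.toFinset
    (Multiset.toFinset_nonempty.2 h) id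
  have : maxPart l = x := by rw [← id_eq x, ← heq, Finset.sup_def]; simp [maxPart]
  exact this ▸ Multiset.mem_toFinset.1 hx

theorem minPart_mem {l : Ptn} (h : l ≠ 0) : minPart l ∈ l :=
  Nat.sInf_mem (s := {a | a ∈ l}) (Multiset.exists_mem_of_ne_zero h)

theorem height_minPart (l : Ptn) : height l (minPart l) = Multiset.card l := by
  have hle : ∀ a ∈ l, minPart l ≤ a := fun _ ha => Nat.sInf_le (s := {a | a ∈ l}) ha
  rw [height, Multiset.filter_eq_self.2 hle]

theorem sum_up (l : Ptn) : (up l).sum = l.sum + 1 := by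
  rcases eq_or_ne l 0 with rfl | hl
  · rfl
  · have h := congrArg Multiset.sum (Multiset.cons_erase (maxPart_mem hl))
    rw [Multiset.sum_cons] at h
    rw [up, Multiset.sum_cons]
    omega

theorem csum_le_csum_up (l : Ptn) (k : ℕ) : csum l k ≤ csum (up l) k := by
  rcases eq_or_ne l 0 with rfl | hl
  · simp [csum, height]
  · have h := congrArg (csum · k) (Multiset.cons_erase (maxPart_mem hl))
    simp only [csum_cons] at h
    rw [up, csum_cons]
    omega

theorem height_up (l : Ptn) {a : ℕ} (ha : 1 ≤ a) :
    height (up l) a = height l a + if a = maxPart l + 1 then 1 else 0 := by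
  rcases eq_or_ne l 0 with rfl | hl
  · rw [up, Multiset.erase_zero, height_cons]
    simp only [maxPart, Multiset.sup_zero, Nat.bot_eq_zero]
    split_ifs <;> omega
  · have h := congrArg (height · a) (Multiset.cons_erase (maxPart_mem hl))
    simp only [height_cons] at h
    rw [up, height_cons]
    split_ifs at h ⊢ <;> omega

theorem psum_up (l : Ptn) {j : ℕ} (hj : 1 ≤ j) : psum (up l) j = psum l j + 1 := by
  have htop : height l (maxPart l + 1) = 0 :=
    height_eq_zero_of_forall_lt fun _ hx => Nat.lt_succ_of_le (Multiset.le_sup hx)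
  have hmem : maxPart l + 1 ∈ Finset.Icc 1 (l.sum + 1) :=
    Finset.mem_Icc.2 ⟨by omega,
      Nat.succ_le_succ (Multiset.sup_le.2 fun _ hx => Multiset.le_sum_of_mem hx)⟩
  calc psum (up l) j
      = ∑ a ∈ Finset.Icc 1 (l.sum + 1), min j (height (up l) a) :=
        psum_eq_sum_Icc_of_sum_le (sum_up l).le j
    _ = ∑ a ∈ Finset.Icc 1 (l.sum + 1),
          (min j (height l a) + if a = maxPart l + 1 then 1 else 0) :=
        Finset.sum_congr rfl fun a ha => by
          rw [height_up l (Finset.mem_Icc.1 ha).1]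
          split_ifs with htopa
          · rw [htopa, htop]
            omega
          · rfl
    _ = psum l j + 1 := by
        rw [Finset.sum_add_distrib, ← psum_eq_sum_Icc_of_sum_le l.sum.le_succ,
          Finset.sum_ite_eq' _ _ _, if_pos hmem]

theorem csum_le_csum_down_add_one (l : Ptn) (k : ℕ) : csum l k ≤ csum (down l) k + 1 := by
  rcases eq_or_ne l 0 with rfl | hl
  · simp [csum, height]
  · have h := congrArg (csum · k) (Multiset.cons_erase (minPart_mem hl))
    simp only [csum_cons] at h
    rw [down]
    split_ifs
    · omega
    · rw [csum_cons]
      omega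

theorem sum_down_add_one {l : Ptn} (hpos : IsPartition l) (hl : l ≠ 0) :
    (down l).sum + 1 = l.sum := by
  have h := congrArg Multiset.sum (Multiset.cons_erase (minPart_mem hl))
  have := hpos _ (minPart_mem hl)
  rw [Multiset.sum_cons] at h
  rw [down]
  split_ifs
  · omega
  · rw [Multiset.sum_cons]
    omega

theorem height_down_add {l : Ptn} (hpos : IsPartition l) (hl : l ≠ 0) {a : ℕ} (ha : 1 ≤ a) :
    height (down l) a + (if a = minPart l then 1 else 0) = height l a := by
  have h := congrArg (height · a) (Multiset.cons_erase (minPart_mem hl))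
  have := hpos _ (minPart_mem hl)
  simp only [height_cons] at h
  rw [down]
  by_cases hmin : minPart l ≤ 1
  · rw [if_pos hmin]
    split_ifs at h ⊢ <;> omega
  · rw [if_neg hmin, height_cons]
    split_ifs at h ⊢ <;> omega

theorem psum_down {l : Ptn} (hpos : IsPartition l) (hl : l ≠ 0) {j : ℕ}
    (hj : j < Multiset.card l) : psum (down l) j = psum l j := by
  have hsum := sum_down_add_one hpos hl
  rw [psum_eq_sum_Icc_of_sum_le (show (down l).sum ≤ l.sum by omega), psum]
  refine Finset.sum_congr rfl fun a ha => ?_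
  have hheight := height_down_add hpos hl (Finset.mem_Icc.1 ha).1
  split_ifs at hheight with hmin
  · rw [hmin, height_minPart] at *
    omega
  · rw [← hheight, add_zero]

/-! ### The Sommers duality map -/

/-- The operation applied to the unmarked part `η` in the definition of `d_S`, so that in all three
types `d_S⟨ν ∪ η, ν⟩` is the collapse of `(ν ∪ innerCollapse X η)*`. -/
noncomputable def innerCollapse (X : PType) (eta : Ptn) : Ptn :=
  match X with
  | PType.B => collapse PType.C (down eta)
  | PType.C => collapse PType.B (up eta)
  | PType.D => transpose (collapse PType.D (transpose eta))

theorem dS_eq_collapse (X : PType) (nu eta : Ptn) :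
    dS X nu eta = collapse (dualType X) (transpose (nu + innerCollapse X eta)) := by
  cases X <;> rfl

theorem dualType_dualType (X : PType) : dualType (dualType X) = X := by cases X <;> rfl

theorem ne_zero_of_sumParity_B {l : Ptn} (hl : sumParity PType.B l.sum) : l ≠ 0 := by
  rintro rfl
  simp [sumParity] at hl

theorem sumParity_down {l : Ptn} (hpos : IsPartition l) (hl : sumParity PType.B l.sum) :
    sumParity PType.C (down l).sum := by
  have h := sum_down_add_one hpos (ne_zero_of_sumParity_B hl)
  rw [sumParity, ← h] at hl
  exact Nat.not_odd_iff_even.1 fun hodd => Nat.not_even_iff_odd.2 hl hodd.add_one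

theorem sumParity_up {l : Ptn} (hl : sumParity PType.C l.sum) :
    sumParity PType.B (up l).sum := by
  rw [sum_up]
  exact hl.add_one

theorem sumParity_transpose {X : PType} {l : Ptn} (hl : sumParity X l.sum) :
    sumParity X (transpose l).sum := by
  rwa [sum_transpose]

theorem sum_innerCollapse_add {X : PType} {eta : Ptn} (hpos : IsPartition eta)
    (heta : sumParity X eta.sum) :
    (innerCollapse X eta).sum + parityShift X = eta.sum + parityShift (dualType X) := by
  cases X
  · have hsum := (isCollapse_collapse (sumParity_down hpos heta)).2.1
    have := sum_down_add_one hpos (ne_zero_of_sumParity_B heta)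
    simp only [innerCollapse, hsum, parityShift, dualType]
    omega
  · have hsum := (isCollapse_collapse (sumParity_up heta)).2.1
    simp only [innerCollapse, hsum, sum_up, parityShift, dualType]
  · have hsum := (isCollapse_collapse (sumParity_transpose heta)).2.1
    simp only [innerCollapse, sum_transpose, hsum, parityShift, dualType]

theorem csum_le_csum_innerCollapse_add {X : PType} {eta : Ptn} (hpos : IsPartition eta)
    (heta : sumParity X eta.sum) (k : ℕ) :
    csum eta k ≤ csum (innerCollapse X eta) k + parityShift X := by
  cases X
  · have hcol := isCollapse_collapse (sumParity_down hpos heta)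
    exact (csum_le_csum_down_add_one eta k).trans
      (Nat.succ_le_succ (csum_le_csum_of_dom hcol.2.2.1 hcol.2.1 k))
  · have hcol := isCollapse_collapse (sumParity_up heta)
    exact (csum_le_csum_up eta k).trans (csum_le_csum_of_dom hcol.2.2.1 hcol.2.1 k)
  · have h := psum_le_psum_collapse_add (sumParity_transpose heta) k
    rw [psum_transpose] at h
    simp only [innerCollapse, csum_transpose, parityShift]
    omega

theorem psum_le_psum_collapse_down {eta : Ptn} (hpos : IsPartition eta)
    (heta : sumParity PType.B eta.sum) {p : ℕ} (heven : Even (psum eta p)) :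
    psum eta p ≤ psum (collapse PType.C (down eta)) p := by
  have hcard : p < Multiset.card eta := by
    by_contra hcard
    rw [psum_of_card_le (by omega)] at heven
    exact Nat.not_odd_iff_even.2 heven heta
  have hdown := psum_down hpos (ne_zero_of_sumParity_B heta) hcard
  rw [psum_collapse_eq_of_even (sumParity_down hpos heta), hdown]
  simpa [shiftedSum, parityShift, hdown] using heven

theorem psum_add_one_le_psum_collapse_up {eta : Ptn} (heta : sumParity PType.C eta.sum) {p : ℕ}
    (heven : Even (psum eta p)) (hp : Odd p) :
    psum eta p + 1 ≤ psum (collapse PType.B (up eta)) p := by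
  have hup := psum_up eta hp.pos
  rw [psum_collapse_eq_of_even (sumParity_up heta), hup]
  simp only [shiftedSum, parityShift, hup]
  grind

theorem InP.even_csum_of_odd {m : Ptn} (hm : InP PType.D m) (hsum : Even m.sum) {k : ℕ}
    (hk : Odd k) : Even (csum m k) := by
  have hrim := (onBoundary_height m k).csum_add_psum_eq
  have heven := hm.even_shiftedSum_height k
  simp only [shiftedSum, parityShift] at heven
  obtain ⟨i, rfl⟩ := hk
  grind

theorem psum_add_one_le_psum_transpose_collapse {eta : Ptn} (heta : sumParity PType.D eta.sum)
    {p : ℕ} (hodd : Odd (psum eta p)) (hp : Odd p) :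
    psum eta p + 1 ≤ psum (transpose (collapse PType.D (transpose eta))) p := by
  have hcol := isCollapse_collapse (sumParity_transpose heta)
  have hle := csum_le_csum_of_dom hcol.2.2.1 hcol.2.1 p
  have heven := hcol.1.even_csum_of_odd (hcol.2.1 ▸ sumParity_transpose heta) hp
  rw [csum_transpose] at hle
  rw [psum_transpose]
  grind

theorem psum_add_le_psum_innerCollapse {X : PType} {eta : Ptn} (hpos : IsPartition eta)
    (heta : sumParity X eta.sum) {p : ℕ} (heven : Even (shiftedSum X eta p))
    (hp : Odd (p + eta.sum)) :
    psum eta p + parityShift (dualType X) ≤ psum (innerCollapse X eta) p := by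
  cases X <;> simp only [shiftedSum, parityShift, sumParity] at heven heta
  · exact psum_le_psum_collapse_down hpos heta (by grind)
  · exact psum_add_one_le_psum_collapse_up heta (by grind) (by grind)
  · exact psum_add_one_le_psum_transpose_collapse heta (by grind) (by grind)

/-! ### Marked partitions -/

namespace IsMarked

variable {X : PType} {nu eta : Ptn}

theorem isPartition_eta (h : IsMarked X nu eta) : IsPartition eta :=
  fun a ha => h.1.1 a (Multiset.mem_add.2 (Or.inr ha))

theorem notMem_nu (h : IsMarked X nu eta) {a : ℕ} (hbad : badPart X a) : a ∉ nu := by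
  intro ha
  have hpar := (h.2.2.1 a ha).2
  cases X <;> simp only [badPart, markParity] at hbad hpar <;> grind

theorem inP_nu (h : IsMarked X nu eta) : InP X nu :=
  ⟨fun a ha => h.1.1 a (Multiset.mem_add.2 (Or.inl ha)), fun a hbad => by
    rw [Multiset.count_eq_zero.2 (h.notMem_nu hbad)]
    exact Even.zero⟩

theorem inP_eta (h : IsMarked X nu eta) : InP X eta :=
  ⟨h.isPartition_eta, fun a hbad => by
    have heven := h.1.2 a hbad
    rwa [Multiset.count_add, Multiset.count_eq_zero.2 (h.notMem_nu hbad), zero_add] at heven⟩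

theorem even_sum_nu (h : IsMarked X nu eta) : Even nu.sum := by
  have hsum := h.inP_nu.even_shiftedSum_height 0
  rw [height_zero_right, shiftedSum, psum_of_card_le le_rfl] at hsum
  have hcard := h.2.2.2
  cases X <;> simp only [parityShift, reduceCtorEq, or_false, or_true, or_self, true_imp_iff]
    at hsum hcard <;> grind

theorem sumParity_eta (h : IsMarked X nu eta) : sumParity X eta.sum := by
  have hsum := h.2.1
  have hnu := h.even_sum_nu
  rw [Multiset.sum_add] at hsum
  cases X <;> simp only [sumParity] at hsum ⊢ <;> grind

theorem sum_add_innerCollapse (h : IsMarked X nu eta) :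
    (nu + innerCollapse X eta).sum + parityShift X =
      (nu + eta).sum + parityShift (dualType X) := by
  have := sum_innerCollapse_add h.isPartition_eta h.sumParity_eta
  rw [Multiset.sum_add, Multiset.sum_add]
  omega

theorem sumParity_transpose_add_innerCollapse (h : IsMarked X nu eta) :
    sumParity (dualType X) (transpose (nu + innerCollapse X eta)).sum := by
  have hsum := h.sum_add_innerCollapse
  have hpar := h.2.1
  rw [sum_transpose]
  cases X <;> simp only [sumParity, dualType, parityShift] at hsum hpar ⊢ <;> grind

theorem isCollapse_dS (h : IsMarked X nu eta) :
    IsCollapse (dualType X) (transpose (nu + innerCollapse X eta)) (dS X nu eta) :=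
  dS_eq_collapse X nu eta ▸ isCollapse_collapse h.sumParity_transpose_add_innerCollapse

theorem sum_dS_add (h : IsMarked X nu eta) :
    (dS X nu eta).sum + parityShift X = (nu + eta).sum + parityShift (dualType X) := by
  rw [h.isCollapse_dS.2.1, sum_transpose, h.sum_add_innerCollapse]

theorem psum_dS_le (h : IsMarked X nu eta) (k : ℕ) :
    psum (dS X nu eta) k ≤ csum nu k + csum (innerCollapse X eta) k := by
  rw [← csum_add, ← psum_transpose]
  exact h.isCollapse_dS.2.2.1 k

theorem csum_le_psum_dS_add_of_odd (h : IsMarked X nu eta) {j : ℕ}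
    (hodd : Odd (shiftedSum (dualType X) (dS X nu eta) j)) :
    csum (nu + eta) j ≤ psum (dS X nu eta) j + parityShift X := by
  have hinner := csum_le_csum_innerCollapse_add h.isPartition_eta h.sumParity_eta j
  rw [dS_eq_collapse] at hodd ⊢
  rw [psum_collapse_eq_of_odd h.sumParity_transpose_add_innerCollapse hodd, psum_transpose,
    csum_add, csum_add]
  omega

theorem psum_dS_add_psum_add_le (h : IsMarked X nu eta) {a p : ℕ}
    (hrim : OnBoundary eta p a) (heven : Even (shiftedSum X eta p)) (hp : Odd (p + eta.sum))
    (k : ℕ) :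
    psum (dS X nu eta) k + psum (nu + eta) (height nu a + p) + parityShift X ≤
      k * (height nu a + p) + (nu + eta).sum := by
  have hdS := h.psum_dS_le k
  have hnu := csum_add_psum_le nu k (height nu a)
  have hinner := csum_add_psum_le (innerCollapse X eta) k p
  have hsum := sum_innerCollapse_add h.isPartition_eta h.sumParity_eta
  have hincrease := psum_add_le_psum_innerCollapse h.isPartition_eta h.sumParity_eta heven hp
  have hadd := (onBoundary_height nu a).psum_add_le hrim
  rw [mul_add, Multiset.sum_add]
  omega

end IsMarked

theorem AntiPart.badPart {X : PType} {l : Ptn} {a : ℕ} (h : AntiPart X l a) : badPart X a := by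
  cases X <;> exact h.1

theorem AntiPart.even_height_add_sum {X : PType} {l : Ptn} {a : ℕ} (h : AntiPart X l a)
    (hl : sumParity X l.sum) : Even (height l a + l.sum) := by
  cases X <;> simp only [AntiPart, sumParity] at h hl <;> grind

theorem IsMarked.odd_height_eta_add_sum {X : PType} {nu eta : Ptn} (h : IsMarked X nu eta) {a : ℕ}
    (hanti : AntiPart X (nu + eta) a) (hodd : Odd (height nu a)) :
    Odd (height eta a + eta.sum) := by
  have heven := hanti.even_height_add_sum h.2.1
  have hsum := h.even_sum_nu
  rw [height_add, Multiset.sum_add] at heven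
  grind

theorem add_add_parityShift_ne {X : PType} {a m n s t : ℕ} (hbad : badPart X a)
    (hn : sumParity X n) (hm : Even (m + 1 + n)) (hs : Even (s + parityShift (dualType X) * a))
    (ht : Odd (t + parityShift X * m)) : s + t + parityShift X ≠ a * m + n := by
  intro heq
  have hparity := congrArg Even heq
  cases X <;>
    simp only [badPart, sumParity, parityShift, dualType, ← Nat.not_even_iff_odd, Nat.even_add,
      Nat.even_mul, Nat.not_even_one, one_mul, zero_mul, add_zero] at * <;>
    grind

section NonspecialPart

variable {X : PType} {nu eta : Ptn} {a m : ℕ}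

theorem psum_dS_add_psum_add_dist_le (h : IsMarked X nu eta) (ha : a ∈ nu + eta)
    (hanti : AntiPart X (nu + eta) a) (hodd : Odd (height nu a))
    (hm : height (nu + eta) a = m + 1) (k : ℕ) :
    psum (dS X nu eta) k + psum (nu + eta) m + parityShift X + Nat.dist k a ≤
      k * m + (nu + eta).sum := by
  have hbad := hanti.badPart
  have haeta : a ∈ eta := (Multiset.mem_add.1 ha).resolve_left (h.notMem_nu hbad)
  obtain ⟨q, hq⟩ : ∃ q, height eta a = q + 2 :=
    Nat.exists_eq_add_of_le' (by have := h.inP_eta.height_succ_add_two_le haeta hbad; omega)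
  obtain rfl : m = height nu a + q + 1 := by
    rw [height_add] at hm
    omega
  have hparity : Odd (q + 2 + eta.sum) := hq ▸ h.odd_height_eta_add_sum hanti hodd
  have hrim {p : ℕ} (hp : q ≤ p ∧ p ≤ q + 2) : OnBoundary eta p a :=
    h.inP_eta.onBoundary_of_bad haeta hbad hq hp
  have hbelow := h.psum_dS_add_psum_add_le (hrim (by omega))
    (h.inP_eta.even_shiftedSum_of_height_eq_add_two haeta hbad hq) (by grind) k
  have habove := h.psum_dS_add_psum_add_le (hrim (by omega))
    (hq ▸ h.inP_eta.even_shiftedSum_height a) hparity k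
  have hrim_add {j : ℕ} (hj : height nu a + q ≤ j ∧ j ≤ height nu a + q + 2) :
      OnBoundary (nu + eta) j a :=
    h.1.onBoundary_of_bad ha hbad hm hj
  have hline_below := (hrim_add (j := height nu a + q) (by omega)).psum_add_mul_eq
    (hrim_add (j := height nu a + q + 1) (by omega))
  have hline_above := (hrim_add (j := height nu a + (q + 2)) (by omega)).psum_add_mul_eq
    (hrim_add (j := height nu a + q + 1) (by omega))
  simp only [mul_add, mul_one, Nat.dist] at *
  omega

theorem psum_dS_add_psum_add_lt (h : IsMarked X nu eta) (ha : a ∈ nu + eta)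
    (hanti : AntiPart X (nu + eta) a) (hodd : Odd (height nu a))
    (hm : height (nu + eta) a = m + 1) {k : ℕ}
    (heven : Even (shiftedSum (dualType X) (dS X nu eta) k)) :
    psum (dS X nu eta) k + psum (nu + eta) m + parityShift X < k * m + (nu + eta).sum := by
  have hdist := psum_dS_add_psum_add_dist_le h ha hanti hodd hm k
  refine lt_of_le_of_ne (by omega) fun heq => ?_
  obtain rfl : k = a := Nat.eq_of_dist_eq_zero (by omega)
  exact add_add_parityShift_ne hanti.badPart h.2.1 (hm ▸ hanti.even_height_add_sum h.2.1) heven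
    (h.1.odd_shiftedSum_of_bad ha hanti.badPart hm) heq

theorem psum_add_lt_csum_dS (h : IsMarked X nu eta) (ha : a ∈ nu + eta)
    (hanti : AntiPart X (nu + eta) a) (hodd : Odd (height nu a))
    (hm : height (nu + eta) a = m + 1) :
    psum (nu + eta) m + parityShift (dualType X) < csum (dS X nu eta) m := by
  have hrim := (onBoundary_height (dS X nu eta) m).csum_add_psum_eq
  have hlt := psum_dS_add_psum_add_lt h ha hanti hodd hm
    (h.isCollapse_dS.1.even_shiftedSum_height m)
  have hsum := h.sum_dS_add
  rw [mul_comm] at hlt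
  omega

end NonspecialPart

theorem no_dS_preimage_for_nonspecial_general (X : PType) (nu eta : Ptn)
    (h : IsMarked X nu eta)
    (hns : ¬ SpecialMP X (nu + eta) nu) :
    ¬ ∃ xi omega : Ptn, IsMarked (dualType X) xi omega ∧
        xi + omega = dS X nu eta ∧
        (X = PType.B → omega ≠ 0) ∧
        dS (dualType X) xi omega = nu + eta := by
  rintro ⟨xi, omega, hxi, hmu, -, hdual⟩
  obtain ⟨a, ha, hanti, hodd⟩ : ∃ a ∈ nu + eta, AntiPart X (nu + eta) a ∧ Odd (height nu a) := by
    simpa only [SpecialMP, not_forall, exists_prop, Nat.not_even_iff_odd] using hns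
  obtain ⟨m, hm⟩ : ∃ m, height (nu + eta) a = m + 1 :=
    Nat.exists_eq_add_of_le' (by have := h.1.height_succ_add_two_le ha hanti.badPart; omega)
  have hlower : psum (nu + eta) m + parityShift (dualType X) < csum (dS X nu eta) m :=
    psum_add_lt_csum_dS h ha hanti hodd hm
  have hupper : csum (dS X nu eta) m ≤ psum (nu + eta) m + parityShift (dualType X) := by
    have hshift := h.1.odd_shiftedSum_of_bad ha hanti.badPart hm
    rw [← hmu, ← hdual]
    refine hxi.csum_le_psum_dS_add_of_odd ?_
    rwa [hdual, dualType_dualType]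
  exact hlower.not_ge hupper

/-- Proposition 5.13 of the paper: if `⟨λ,ν⟩` is a nonspecial reduced marked partition and
`μ = d_S⟨λ,ν⟩`, then no marked partition of the dual type with underlying partition `μ`
has Sommers dual equal to `λ`. -/
theorem no_dS_preimage_for_nonspecial (X : PType) (nu eta : Ptn)
    (h : IsMarked X nu eta)
    (hr : Reduced X (nu + eta) nu)
    (hns : ¬ SpecialMP X (nu + eta) nu)
    (hC : X = PType.C → eta ≠ 0) :
    ¬ ∃ xi omega : Ptn, IsMarked (dualType X) xi omega ∧
        xi + omega = dS X nu eta ∧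
        (X = PType.B → omega ≠ 0) ∧
        dS (dualType X) xi omega = nu + eta :=
  no_dS_preimage_for_nonspecial_general X nu eta h hns

end NilDual
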